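/- arXiv:2303.10065 — 4 statements merged into one kernel-verified Lean document; each statement's English description precedes it below -/
import Mathlib

section
/- Let s < 1 be a real number. Then the limit as t → 0⁺ of t^{1−s} · ∫_{[1,∞)} e^{−tx} x^{−s} dx equals ∫_{(0,∞)} e^{−x} x^{−s} dx = Γ(1−s); in particular, the Laplace transform ∫_{[1,∞)} e^{−tx} x^{−s} dx behaves asymptotically like a positive constant times t^{s−1} as t → 0⁺. -/
open MeasureTheory Filter Real Set

/-!
The substitution `y = t x` absorbs the factor `t ^ (1 - s)` and turns the integral over `[1, ∞)`
into `∫ e^{-y} y^{-s} dy` over `(t, ∞)`. The integrand no longer depends on `t` and is integrable on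
`(0, ∞)`, so the integral over `(t, ∞)` tends to the one over `(0, ∞)`.
-/

section PowerWeight

open scoped Topology

variable {E : Type*} [NormedAddCommGroup E] [NormedSpace ℝ E] (f : ℝ → E) (p : ℝ) {a t : ℝ}

theorem rpow_smul_integral_rpow_smul_comp_mul_left_Ioi (ha : 0 ≤ a) (ht : 0 < t) :
    t ^ (p + 1) • ∫ x in Ioi a, x ^ p • f (t * x) = ∫ y in Ioi (t * a), y ^ p • f y := by
  have weight_mul : EqOn (fun x ↦ t ^ p • x ^ p • f (t * x))
      (fun x ↦ (t * x) ^ p • f (t * x)) (Ioi a) := fun x hx ↦ by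
    simp only [smul_smul, mul_rpow ht.le (ha.trans_lt hx).le]
  calc t ^ (p + 1) • ∫ x in Ioi a, x ^ p • f (t * x)
      = t • ∫ x in Ioi a, t ^ p • x ^ p • f (t * x) := by
        rw [integral_smul, smul_smul, rpow_add_one ht.ne', mul_comm]
    _ = t • ∫ x in Ioi a, (t * x) ^ p • f (t * x) := by
        rw [setIntegral_congr_fun measurableSet_Ioi weight_mul]
    _ = ∫ y in Ioi (t * a), y ^ p • f y :=
        integral_comp_mul_left_Ioi' (fun y ↦ y ^ p • f y) a ht

variable {f p}

theorem tendsto_rpow_smul_integral_rpow_smul_comp_mul_left_Ioi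
    (hf : IntegrableOn (fun x ↦ x ^ p • f x) (Ioi 0)) (ha : 0 ≤ a) :
    Tendsto (fun t : ℝ ↦ t ^ (p + 1) • ∫ x in Ioi a, x ^ p • f (t * x))
      (𝓝[>] 0) (𝓝 (∫ x in Ioi 0, x ^ p • f x)) := by
  have lower_limit : Tendsto (fun t : ℝ ↦ t * a) (𝓝[>] 0) (𝓝[≥] 0) :=
    ((continuous_mul_const a).tendsto' 0 0 (zero_mul a)).inf <|
      tendsto_principal_principal.2 fun _ ht ↦ mul_nonneg (le_of_lt ht) ha
  refine (hf.continuousWithinAt_Ici_primitive_Ioi.tendsto.comp lower_limit).congr' ?_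
  filter_upwards [self_mem_nhdsWithin] with t ht
  exact (rpow_smul_integral_rpow_smul_comp_mul_left_Ioi f p ha ht).symm

end PowerWeight

/-- For `s < 1`, the limit as `t → 0⁺` of `t^(1-s) * ∫_{[1,∞)} e^{-tx} x^{-s} dx` equals
`∫_{(0,∞)} e^{-x} x^{-s} dx = Γ(1-s)`. -/
theorem laplace_asymptotics_power (s : ℝ) (hs : s < 1) :
    (∫ x in Set.Ioi (0:ℝ), Real.exp (-x) * x ^ (-s)) = Real.Gamma (1 - s) ∧
    Filter.Tendsto
      (fun t : ℝ => t ^ (1 - s) * ∫ x in Set.Ici (1:ℝ), Real.exp (-t * x) * x ^ (-s))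
      (nhdsWithin 0 (Set.Ioi 0))
      (nhds (∫ x in Set.Ioi (0:ℝ), Real.exp (-x) * x ^ (-s))) := by
  have exponent_eq : 1 - s - 1 = -s := by ring
  have gamma_eq : Gamma (1 - s) = ∫ x in Ioi 0, exp (-x) * x ^ (-s) := by
    rw [Gamma_eq_integral (sub_pos.2 hs), exponent_eq]
  have integrable : IntegrableOn (fun x ↦ x ^ (-s) • exp (-x)) (Ioi 0) := by
    simpa only [exponent_eq, smul_eq_mul, mul_comm] using GammaIntegral_convergent (sub_pos.2 hs)
  refine ⟨gamma_eq.symm, ?_⟩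
  simpa only [integral_Ici_eq_integral_Ioi, neg_add_eq_sub, smul_eq_mul, neg_mul, mul_neg, mul_comm]
    using tendsto_rpow_smul_integral_rpow_smul_comp_mul_left_Ioi integrable zero_le_one
end

section
/- The limit as t → 0⁺ (with t ∈ (0,1)) of (∫_{[1,∞)} e^{−tx} x^{−1} dx) / (−log t) equals 1. -/
open MeasureTheory Filter Real Set

/-!
Split `∫ x in Ioi a, e^{-tx} / x` at `x = 1 / t`. Below the cut `1 - tx ≤ e^{-tx} ≤ 1`, so that part
differs from `∫ x in a..1/t, 1 / x = -log (a * t)` by at most `1`; above the cut `1 / x ≤ t`, so the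
tail is at most `∫ x in Ioi (1 / t), t * e^{-tx} = e⁻¹`. A bounded error is negligible against
`-log t → ∞`.
-/

open scoped Topology Asymptotics

section PointwiseBounds

variable {b t x : ℝ}

lemma inv_sub_le_exp_neg_mul_mul_inv (hx : 0 < x) : x⁻¹ - t ≤ exp (-t * x) * x⁻¹ :=
  calc x⁻¹ - t = (-t * x + 1) * x⁻¹ := by field_simp; ring
    _ ≤ exp (-t * x) * x⁻¹ := by gcongr; exact add_one_le_exp _

lemma exp_neg_mul_mul_inv_le_inv (ht : 0 ≤ t) (hx : 0 ≤ x) : exp (-t * x) * x⁻¹ ≤ x⁻¹ :=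
  mul_le_of_le_one_left (inv_nonneg.2 hx) (exp_le_one_iff.2 (by nlinarith))

lemma exp_neg_mul_mul_inv_le_of_le (hb : 0 < b) (hbx : b ≤ x) :
    exp (-t * x) * x⁻¹ ≤ exp (-t * x) * b⁻¹ := by
  gcongr

end PointwiseBounds

section Interval

variable {a b : ℝ}

lemma intervalIntegrable_inv_of_pos (ha : 0 < a) (hb : 0 < b) :
    IntervalIntegrable (fun x : ℝ => x⁻¹) volume a b :=
  intervalIntegrable_inv_iff.2 (.inr (notMem_uIcc_of_lt ha hb))

lemma intervalIntegrable_exp_neg_mul_mul_inv (ha : 0 < a) (hb : 0 < b) (t : ℝ) :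
    IntervalIntegrable (fun x => exp (-t * x) * x⁻¹) volume a b :=
  (intervalIntegrable_inv_of_pos ha hb).continuousOn_mul (by fun_prop)

lemma log_div_sub_le_integral_exp_neg_mul_mul_inv (ha : 0 < a) (hab : a ≤ b) (t : ℝ) :
    log (b / a) - t * (b - a) ≤ ∫ x in a..b, exp (-t * x) * x⁻¹ := by
  have hb : 0 < b := ha.trans_le hab
  have hinv := intervalIntegrable_inv_of_pos ha hb
  calc log (b / a) - t * (b - a) = ∫ x in a..b, (x⁻¹ - t) := by
        rw [intervalIntegral.integral_sub hinv intervalIntegrable_const,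
          integral_inv_of_pos ha hb, intervalIntegral.integral_const, smul_eq_mul, mul_comm t]
    _ ≤ ∫ x in a..b, exp (-t * x) * x⁻¹ :=
        intervalIntegral.integral_mono_on hab (hinv.sub intervalIntegrable_const)
          (intervalIntegrable_exp_neg_mul_mul_inv ha hb t)
          fun _ hx => inv_sub_le_exp_neg_mul_mul_inv (ha.trans_le hx.1)

lemma integral_exp_neg_mul_mul_inv_le_log_div {t : ℝ} (ha : 0 < a) (hab : a ≤ b) (ht : 0 ≤ t) :
    ∫ x in a..b, exp (-t * x) * x⁻¹ ≤ log (b / a) := by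
  have hb : 0 < b := ha.trans_le hab
  rw [← integral_inv_of_pos ha hb]
  exact intervalIntegral.integral_mono_on hab (intervalIntegrable_exp_neg_mul_mul_inv ha hb t)
    (intervalIntegrable_inv_of_pos ha hb)
    fun _ hx => exp_neg_mul_mul_inv_le_inv ht (ha.le.trans hx.1)

end Interval

section HalfLine

variable {a b t : ℝ}

lemma integrableOn_exp_neg_mul_mul_inv_Ioi (hb : 0 < b) (ht : 0 < t) :
    IntegrableOn (fun x => exp (-t * x) * x⁻¹) (Ioi b) := by
  refine ((integrableOn_exp_mul_Ioi (neg_neg_of_pos ht) b).mul_const b⁻¹).mono' (by fun_prop) ?_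
  filter_upwards [ae_restrict_mem measurableSet_Ioi] with x (hx : b < x)
  have hx0 : 0 < x := hb.trans hx
  rw [norm_of_nonneg (by positivity)]
  exact exp_neg_mul_mul_inv_le_of_le hb hx.le

lemma integral_Ioi_exp_neg_mul_mul_inv_nonneg (hb : 0 ≤ b) (t : ℝ) :
    0 ≤ ∫ x in Ioi b, exp (-t * x) * x⁻¹ :=
  setIntegral_nonneg measurableSet_Ioi fun _ hx =>
    mul_nonneg (exp_nonneg _) (inv_nonneg.2 (hb.trans (le_of_lt hx)))

lemma integral_Ioi_exp_neg_mul_mul_inv_le (hb : 0 < b) (ht : 0 < t) :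
    ∫ x in Ioi b, exp (-t * x) * x⁻¹ ≤ exp (-t * b) / (t * b) := by
  have ht' : -t < 0 := neg_neg_of_pos ht
  calc ∫ x in Ioi b, exp (-t * x) * x⁻¹ ≤ ∫ x in Ioi b, exp (-t * x) * b⁻¹ :=
        setIntegral_mono_on (integrableOn_exp_neg_mul_mul_inv_Ioi hb ht)
          ((integrableOn_exp_mul_Ioi ht' b).mul_const _) measurableSet_Ioi
          fun _ hx => exp_neg_mul_mul_inv_le_of_le hb (le_of_lt hx)
    _ = exp (-t * b) / (t * b) := by
        rw [integral_mul_const, integral_exp_mul_Ioi ht']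
        field_simp

lemma abs_integral_Ioi_exp_neg_mul_mul_inv_add_log_le_one (ha : 0 < a) (ht : 0 < t)
    (hat : a * t ≤ 1) : |(∫ x in Ioi a, exp (-t * x) * x⁻¹) + log (a * t)| ≤ 1 := by
  have hcut : 0 < t⁻¹ := inv_pos.2 ht
  have hle : a ≤ t⁻¹ := by rwa [← one_div, le_div_iff₀ ht]
  have hlog : log (t⁻¹ / a) = -log (a * t) := by
    rw [← log_inv, mul_inv_rev, div_eq_mul_inv]
  have hsplit := intervalIntegral.integral_interval_add_Ioi
    (integrableOn_exp_neg_mul_mul_inv_Ioi ha ht) (integrableOn_exp_neg_mul_mul_inv_Ioi hcut ht)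
  have hnear_ge : -log (a * t) - 1 ≤ ∫ x in a..t⁻¹, exp (-t * x) * x⁻¹ := by
    have h := log_div_sub_le_integral_exp_neg_mul_mul_inv ha hle t
    rw [hlog, mul_sub, mul_inv_cancel₀ ht.ne'] at h
    linarith [mul_pos ht ha]
  have hnear_le : ∫ x in a..t⁻¹, exp (-t * x) * x⁻¹ ≤ -log (a * t) :=
    hlog ▸ integral_exp_neg_mul_mul_inv_le_log_div ha hle ht.le
  have htail_nonneg := integral_Ioi_exp_neg_mul_mul_inv_nonneg hcut.le t
  have htail_le : ∫ x in Ioi t⁻¹, exp (-t * x) * x⁻¹ ≤ 1 :=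
    calc ∫ x in Ioi t⁻¹, exp (-t * x) * x⁻¹ ≤ exp (-t * t⁻¹) / (t * t⁻¹) :=
          integral_Ioi_exp_neg_mul_mul_inv_le hcut ht
      _ = exp (-1) := by rw [neg_mul, mul_inv_cancel₀ ht.ne', div_one]
      _ ≤ 1 := exp_le_one_iff.2 (by norm_num)
  rw [abs_le]
  constructor <;> linarith

end HalfLine

section Asymptotics

lemma tendsto_neg_log_nhdsGT_zero : Tendsto (fun t => -log t) (𝓝[>] 0) atTop :=
  tendsto_neg_atBot_atTop.comp tendsto_log_nhdsGT_zero

variable {a : ℝ}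

lemma integral_Ioi_exp_neg_mul_mul_inv_sub_neg_log_isBigO_one (ha : 0 < a) :
    (fun t => (∫ x in Ioi a, exp (-t * x) * x⁻¹) - -log t) =O[𝓝[>] 0] fun _ => (1 : ℝ) := by
  refine .of_bound (1 + |log a|) ?_
  filter_upwards [Ioc_mem_nhdsGT (inv_pos.2 ha)] with t ⟨ht, hta⟩
  have hat : a * t ≤ 1 := (mul_le_mul_of_nonneg_left hta ha.le).trans_eq (mul_inv_cancel₀ ha.ne')
  rw [norm_one, mul_one, norm_eq_abs]
  calc |(∫ x in Ioi a, exp (-t * x) * x⁻¹) - -log t|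
      = |(∫ x in Ioi a, exp (-t * x) * x⁻¹) + log (a * t) - log a| := by
        rw [log_mul ha.ne' ht.ne']; congr 1; ring
    _ ≤ |(∫ x in Ioi a, exp (-t * x) * x⁻¹) + log (a * t)| + |log a| := abs_sub _ _
    _ ≤ 1 + |log a| := by
        gcongr; exact abs_integral_Ioi_exp_neg_mul_mul_inv_add_log_le_one ha ht hat

theorem laplace_asymptotics_log_general (ha : 0 < a) :
    Tendsto (fun t : ℝ => (∫ x in Ici a, exp (-t * x) * x⁻¹) / (-log t)) (𝓝[>] 0) (𝓝 1) := by
  simp only [integral_Ici_eq_integral_Ioi]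
  have hequiv : (fun t => ∫ x in Ioi a, exp (-t * x) * x⁻¹) ~[𝓝[>] 0] fun t => -log t :=
    (integral_Ioi_exp_neg_mul_mul_inv_sub_neg_log_isBigO_one ha).trans_isLittleO <|
      (Asymptotics.isLittleO_const_left_of_ne one_ne_zero).2 <|
        tendsto_norm_atTop_atTop.comp tendsto_neg_log_nhdsGT_zero
  exact (Asymptotics.isEquivalent_iff_tendsto_one
    (tendsto_neg_log_nhdsGT_zero.eventually_ne_atTop 0)).1 hequiv

end Asymptotics

/-- The limit as `t → 0⁺` (with `t ∈ (0,1)`) of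
`(∫_{[1,∞)} e^{-tx} x⁻¹ dx) / (-log t)` equals `1`. -/
theorem laplace_asymptotics_log :
    Filter.Tendsto
      (fun t : ℝ => (∫ x in Set.Ici (1:ℝ), Real.exp (-t * x) * x⁻¹) / (-Real.log t))
      (nhdsWithin 0 (Set.Ioo 0 1)) (nhds 1) :=
  (laplace_asymptotics_log_general one_pos).mono_left (nhdsWithin_mono _ Ioo_subset_Ioi_self)
end

section
/- Let μ be a positive Borel measure on ℝ and δ > 0 be such that ∫_ℝ e^{−tx} dμ(x) < ∞ for every t ∈ (0,δ]. Then μ is tempered (i.e., there exists n ∈ ℕ with ∫_ℝ (1+λ²)^{−n} dμ(λ) < ∞) if and only if there exist N ∈ ℕ and C > 0 such that ∫_ℝ e^{−tx} dμ(x) ≤ C t^{−N} for all t ∈ (0,δ]. -/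
open MeasureTheory Filter Real Set

/-! If `μ` is tempered, then `(t (1 + x)) ^ (2n) ≤ (2n)! e ^ (t (1 + x))` shows that `e ^ (-tx)` is
at most a multiple of `t ^ (-2n) (1 + x²) ^ (-n)` on `x ≥ 0`, while `e ^ (-tx) ≤ e ^ (-δx)` on
`x ≤ 0`.

Conversely, sample the transform at `t = δ / m` with `m = 1, 2, …`. If `m = ⌊|x|⌋ + 1`, then
`e ^ (-tx) ≥ e ^ (-δ)` and `m ≤ 2 (1 + x²)`, so `(1 + x²) ^ (-n)` is at most a multiple of
`∑ m ^ (-n) e ^ (-δx / m)`. Integrating term by term, a bound `C t ^ (-N)` on the transform makes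
the sum converge as soon as `n = N + 2`. -/

/-- The Laplace transform `L(μ)(t)` of a positive measure on `ℝ`, with values in `[0, ∞]` so that
it is meaningful without any integrability assumption. -/
noncomputable def laplaceTransform (μ : Measure ℝ) (t : ℝ) : ENNReal :=
  ∫⁻ x, ENNReal.ofReal (exp (-t * x)) ∂μ

/-- A measure on `ℝ` is tempered if it integrates some weight `(1 + l²) ^ (-n)`. -/
def IsTempered (μ : Measure ℝ) : Prop :=
  ∃ n : ℕ, ∫⁻ l, ENNReal.ofReal (((1 + l ^ 2) ^ n)⁻¹) ∂μ < ⊤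

section

variable {μ : Measure ℝ} {δ t x : ℝ}

lemma exp_neg_mul_le_inv_one_add_sq_pow (n : ℕ) (ht : 0 < t) (hx : 0 ≤ x) :
    exp (-t * x) ≤ (t ^ (2 * n))⁻¹ * ((2 * n).factorial * exp t * ((1 + x ^ 2) ^ n)⁻¹) := by
  have h_factorial : (t * (1 + x)) ^ (2 * n) ≤ (2 * n).factorial * exp (t * (1 + x)) := by
    rw [← div_le_iff₀' (by positivity)]
    exact pow_div_factorial_le_exp _ (by positivity) _
  have h_weight : t ^ (2 * n) * (1 + x ^ 2) ^ n ≤ (2 * n).factorial * exp t * exp (t * x) :=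
    calc t ^ (2 * n) * (1 + x ^ 2) ^ n ≤ t ^ (2 * n) * ((1 + x) ^ 2) ^ n := by
          gcongr
          nlinarith
      _ = (t * (1 + x)) ^ (2 * n) := by rw [mul_pow, pow_mul (1 + x)]
      _ ≤ (2 * n).factorial * exp (t * (1 + x)) := h_factorial
      _ = (2 * n).factorial * exp t * exp (t * x) := by
          rw [mul_one_add, exp_add, mul_assoc]
  rw [neg_mul, exp_neg, ← div_eq_mul_inv _ ((1 + x ^ 2) ^ n), le_inv_mul_iff₀ (by positivity),
    le_div_iff₀ (by positivity), mul_right_comm, ← div_eq_mul_inv, div_le_iff₀ (exp_pos _)]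
  exact h_weight

lemma exp_neg_mul_le_inv_pow_mul (n : ℕ) (ht : t ∈ Ioc 0 δ) (x : ℝ) :
    exp (-t * x) ≤ (t ^ (2 * n))⁻¹ *
      (δ ^ (2 * n) * exp (-δ * x) + (2 * n).factorial * exp δ * ((1 + x ^ 2) ^ n)⁻¹) := by
  obtain ⟨ht0, htδ⟩ := ht
  have hδ : 0 < δ := ht0.trans_le htδ
  rcases le_total x 0 with hx | hx
  · calc exp (-t * x) ≤ exp (-δ * x) := exp_le_exp.2 (by nlinarith)
      _ ≤ (t ^ (2 * n))⁻¹ * (δ ^ (2 * n) * exp (-δ * x)) := by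
          rw [le_inv_mul_iff₀ (by positivity)]
          gcongr
      _ ≤ _ := by
          gcongr
          exact le_add_of_nonneg_right (by positivity)
  · calc exp (-t * x) ≤ (t ^ (2 * n))⁻¹ * ((2 * n).factorial * exp t * ((1 + x ^ 2) ^ n)⁻¹) :=
          exp_neg_mul_le_inv_one_add_sq_pow n ht0 hx
      _ ≤ (t ^ (2 * n))⁻¹ * ((2 * n).factorial * exp δ * ((1 + x ^ 2) ^ n)⁻¹) := by gcongr
      _ ≤ _ := by
          gcongr
          exact le_add_of_nonneg_left (by positivity)

lemma laplaceTransform_le_inv_pow_mul (μ : Measure ℝ) (n : ℕ) (ht : t ∈ Ioc 0 δ) :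
    laplaceTransform μ t ≤ ENNReal.ofReal (t ^ (2 * n))⁻¹ *
      (ENNReal.ofReal (δ ^ (2 * n)) * laplaceTransform μ δ +
        ENNReal.ofReal ((2 * n).factorial * exp δ) *
          ∫⁻ l, ENNReal.ofReal (((1 + l ^ 2) ^ n)⁻¹) ∂μ) := by
  have ht0 : 0 < t := ht.1
  have hδ : 0 < δ := ht0.trans_le ht.2
  unfold laplaceTransform
  rw [← lintegral_const_mul' _ _ ENNReal.ofReal_ne_top,
    ← lintegral_const_mul' _ _ ENNReal.ofReal_ne_top, ← lintegral_add_left (by fun_prop),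
    ← lintegral_const_mul' _ _ ENNReal.ofReal_ne_top]
  refine lintegral_mono fun x => ?_
  rw [← ENNReal.ofReal_mul (by positivity), ← ENNReal.ofReal_mul (by positivity),
    ← ENNReal.ofReal_add (by positivity) (by positivity), ← ENNReal.ofReal_mul (by positivity)]
  exact ENNReal.ofReal_le_ofReal (exp_neg_mul_le_inv_pow_mul n ht x)

lemma IsTempered.exists_laplaceTransform_le (hμ : IsTempered μ)
    (hfin : laplaceTransform μ δ < ⊤) :
    ∃ N : ℕ, ∃ C : ℝ, 0 < C ∧ ∀ t ∈ Ioc 0 δ,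
      laplaceTransform μ t ≤ ENNReal.ofReal (C * t ^ (-(N : ℝ))) := by
  obtain ⟨n, hn⟩ := hμ
  set K := ENNReal.ofReal (δ ^ (2 * n)) * laplaceTransform μ δ +
    ENNReal.ofReal ((2 * n).factorial * exp δ) * ∫⁻ l, ENNReal.ofReal (((1 + l ^ 2) ^ n)⁻¹) ∂μ
  have hK : K ≠ ⊤ := (ENNReal.add_lt_top.2 ⟨ENNReal.mul_lt_top ENNReal.ofReal_lt_top hfin,
    ENNReal.mul_lt_top ENNReal.ofReal_lt_top hn⟩).ne
  refine ⟨2 * n, K.toReal + 1, by positivity, fun t ht => ?_⟩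
  have ht0 : 0 < t := ht.1
  calc laplaceTransform μ t ≤ ENNReal.ofReal (t ^ (2 * n))⁻¹ * K :=
        laplaceTransform_le_inv_pow_mul μ n ht
    _ = ENNReal.ofReal (K.toReal * (t ^ (2 * n))⁻¹) := by
        rw [ENNReal.ofReal_mul ENNReal.toReal_nonneg, ENNReal.ofReal_toReal hK, mul_comm]
    _ ≤ ENNReal.ofReal ((K.toReal + 1) * t ^ (-((2 * n : ℕ) : ℝ))) := by
        rw [rpow_neg ht0.le, rpow_natCast]
        gcongr
        exact le_add_of_nonneg_right zero_le_one

lemma inv_one_add_sq_pow_le_exp (n : ℕ) (hδ : 0 ≤ δ) {m : ℝ} (hm : 0 < m) (hxm : |x| ≤ m)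
    (hmx : m ≤ |x| + 1) :
    ((1 + x ^ 2) ^ n)⁻¹ ≤ 2 ^ n * exp δ * ((m ^ n)⁻¹ * exp (-(δ / m) * x)) := by
  have h_weight : ((1 + x ^ 2) ^ n)⁻¹ ≤ 2 ^ n * (m ^ n)⁻¹ := by
    rw [← div_eq_mul_inv, ← div_pow, ← inv_pow]
    gcongr
    rw [inv_le_comm₀ (by positivity) (by positivity), inv_div]
    nlinarith [sq_abs x, sq_nonneg (|x| - 1)]
  have h_exponent : δ / m * x ≤ δ :=
    calc δ / m * x ≤ δ / m * m := by
          gcongr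
          exact (le_abs_self x).trans hxm
      _ = δ := div_mul_cancel₀ δ hm.ne'
  have h_exp : 1 ≤ exp δ * exp (-(δ / m) * x) := by
    rw [← exp_add]
    exact one_le_exp (by linarith)
  calc ((1 + x ^ 2) ^ n)⁻¹ ≤ 2 ^ n * (m ^ n)⁻¹ := h_weight
    _ ≤ 2 ^ n * (m ^ n)⁻¹ * (exp δ * exp (-(δ / m) * x)) :=
        le_mul_of_one_le_right (by positivity) h_exp
    _ = 2 ^ n * exp δ * ((m ^ n)⁻¹ * exp (-(δ / m) * x)) := by ring

lemma ofReal_inv_one_add_sq_pow_le_tsum (n : ℕ) (hδ : 0 ≤ δ) (x : ℝ) :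
    ENNReal.ofReal (((1 + x ^ 2) ^ n)⁻¹) ≤ ENNReal.ofReal (2 ^ n * exp δ) *
      ∑' j : ℕ, ENNReal.ofReal (((j + 1 : ℝ) ^ n)⁻¹) *
        ENNReal.ofReal (exp (-(δ / (j + 1)) * x)) := by
  have h_floor := inv_one_add_sq_pow_le_exp n hδ (x := x) (m := ⌊|x|⌋₊ + 1) (by positivity)
    (Nat.lt_floor_add_one _).le (by gcongr; exact Nat.floor_le (abs_nonneg x))
  refine (ENNReal.ofReal_le_ofReal h_floor).trans ?_
  rw [ENNReal.ofReal_mul (by positivity), ENNReal.ofReal_mul (p := (_ ^ n)⁻¹) (by positivity)]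
  gcongr
  exact ENNReal.le_tsum (f := fun j : ℕ => ENNReal.ofReal (((j + 1 : ℝ) ^ n)⁻¹) *
    ENNReal.ofReal (exp (-(δ / (j + 1)) * x))) ⌊|x|⌋₊

lemma lintegral_inv_one_add_sq_pow_le_tsum_laplaceTransform (μ : Measure ℝ) (n : ℕ)
    (hδ : 0 ≤ δ) :
    ∫⁻ l, ENNReal.ofReal (((1 + l ^ 2) ^ n)⁻¹) ∂μ ≤ ENNReal.ofReal (2 ^ n * exp δ) *
      ∑' j : ℕ, ENNReal.ofReal (((j + 1 : ℝ) ^ n)⁻¹) * laplaceTransform μ (δ / (j + 1)) := by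
  refine (lintegral_mono (ofReal_inv_one_add_sq_pow_le_tsum n hδ)).trans_eq ?_
  rw [lintegral_const_mul' _ _ ENNReal.ofReal_ne_top, lintegral_tsum (by fun_prop)]
  simp_rw [lintegral_const_mul' _ _ ENNReal.ofReal_ne_top, laplaceTransform]

lemma isTempered_of_laplaceTransform_le {N : ℕ} {C : ℝ} (hδ : 0 < δ)
    (hC : ∀ t ∈ Ioc 0 δ, laplaceTransform μ t ≤ ENNReal.ofReal (C * t ^ (-(N : ℝ)))) :
    IsTempered μ := by
  have h_term (j : ℕ) : ENNReal.ofReal (((j + 1 : ℝ) ^ (N + 2))⁻¹) *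
      laplaceTransform μ (δ / (j + 1)) ≤
        ENNReal.ofReal (C * (δ ^ N)⁻¹ * (1 / ((j + 1 : ℕ) : ℝ) ^ 2)) := by
    have hδj : 0 < δ / ((j : ℝ) + 1) := by positivity
    have h_mem : δ / ((j : ℝ) + 1) ∈ Ioc 0 δ := ⟨hδj, div_le_self hδ.le (by simp)⟩
    grw [hC _ h_mem]
    rw [← ENNReal.ofReal_mul (by positivity), rpow_neg hδj.le, rpow_natCast, div_pow]
    refine ENNReal.ofReal_le_ofReal (le_of_eq ?_)
    push_cast
    field_simp
    ring
  have h_summable : Summable fun j : ℕ => C * (δ ^ N)⁻¹ * (1 / ((j + 1 : ℕ) : ℝ) ^ 2) :=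
    ((summable_nat_add_iff 1).2 (summable_one_div_nat_pow.2 one_lt_two)).mul_left _
  refine ⟨N + 2, ?_⟩
  calc ∫⁻ l, ENNReal.ofReal (((1 + l ^ 2) ^ (N + 2))⁻¹) ∂μ
      ≤ ENNReal.ofReal (2 ^ (N + 2) * exp δ) * ∑' j : ℕ,
          ENNReal.ofReal (((j + 1 : ℝ) ^ (N + 2))⁻¹) * laplaceTransform μ (δ / (j + 1)) :=
        lintegral_inv_one_add_sq_pow_le_tsum_laplaceTransform μ (N + 2) hδ.le
    _ ≤ ENNReal.ofReal (2 ^ (N + 2) * exp δ) * ∑' j : ℕ,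
          ENNReal.ofReal (C * (δ ^ N)⁻¹ * (1 / ((j + 1 : ℕ) : ℝ) ^ 2)) := by
        gcongr with j
        exact h_term j
    _ < ⊤ := ENNReal.mul_lt_top ENNReal.ofReal_lt_top h_summable.tsum_ofReal_lt_top

end

theorem tempered_iff_laplace_polynomial_bound_general (μ : Measure ℝ) {δ : ℝ} (hδ : 0 < δ) :
    IsTempered μ ∧ laplaceTransform μ δ < ⊤ ↔
      ∃ N : ℕ, ∃ C : ℝ, 0 < C ∧ ∀ t ∈ Ioc 0 δ,
        laplaceTransform μ t ≤ ENNReal.ofReal (C * t ^ (-(N : ℝ))) := by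
  constructor
  · rintro ⟨hμ, hfin⟩
    exact hμ.exists_laplaceTransform_le hfin
  · rintro ⟨N, C, -, hC⟩
    exact ⟨isTempered_of_laplaceTransform_le hδ hC,
      (hC δ ⟨hδ, le_rfl⟩).trans_lt ENNReal.ofReal_lt_top⟩

/-- A positive Borel measure `μ` on `ℝ` whose Laplace transform is finite on `(0,δ]`
is tempered if and only if its Laplace transform satisfies a bound `C t^{-N}` on `(0,δ]`. -/
theorem tempered_iff_laplace_polynomial_bound (μ : Measure ℝ) (δ : ℝ) (hδ : 0 < δ)
    (hfin : ∀ t ∈ Set.Ioc 0 δ, ∫⁻ x, ENNReal.ofReal (Real.exp (-t * x)) ∂μ < ⊤) :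
    (∃ n : ℕ, ∫⁻ l, ENNReal.ofReal (((1 + l ^ 2) ^ n)⁻¹) ∂μ < ⊤) ↔
      (∃ N : ℕ, ∃ C : ℝ, 0 < C ∧ ∀ t ∈ Set.Ioc 0 δ,
        ∫⁻ x, ENNReal.ofReal (Real.exp (-t * x)) ∂μ ≤
          ENNReal.ofReal (C * t ^ (-(N:ℝ)))) :=
  (and_iff_left (hfin δ ⟨hδ, le_rfl⟩)).symm.trans
    (tempered_iff_laplace_polynomial_bound_general μ hδ)
end

section
/- Let X be a complex Banach space and J : X → X a continuous antilinear involution (J∘J = id, J additive, J(c·x) = \overline{c}·J(x) for c ∈ ℂ). Let F : {z ∈ ℂ : 0 ≤ Im z ≤ π} → X be continuous, holomorphic on the open strip {z : 0 < Im z < π}, and satisfy F(t + πi) = J(F(t)) for all t ∈ ℝ. Then F(\overline{z} + πi) = J(F(z)) for every z in the closed strip; in particular, J fixes F(πi/2). -/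
open Complex Filter

/-!
Both `F` and `z ↦ J (F (conj z + πi))` are holomorphic on the strip, and they agree on its upper
edge, so it suffices that a function `G` which is continuous up to the boundary and vanishes on one
edge of a strip vanishes identically. Let `a` be a point outside the closed strip and let the disc
`D` of radius `r` about `a` meet the boundary of the strip only in that edge. On the boundary of the
part of the strip inside `D`, either `G = 0` or `|w - a| = r`, so the maximum principle for
`(w - a)⁻ᴺ G w` gives `‖G z‖ ≤ M (|z - a| / r)ᴺ` for all `N`; as `|z - a| < r`, `G z = 0`. Such
discs cover the open strip, whatever the growth of `G` at infinity.
-/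

open Set Metric Topology ComplexConjugate

section BoundaryUniqueness

variable {X : Type*} [NormedAddCommGroup X] [NormedSpace ℂ X] {U : Set ℂ} {a : ℂ} {r : ℝ}
  {f : ℂ → X}

lemma mem_or_mem_sphere_of_mem_frontier_inter_ball {α : Type*} [PseudoMetricSpace α] {s : Set α}
    {x y : α} {ρ : ℝ} (hy : y ∈ frontier (s ∩ ball x ρ)) :
    y ∈ frontier s ∩ ball x ρ ∨ y ∈ sphere x ρ := by
  rcases frontier_inter_subset _ _ hy with ⟨hs, hball⟩ | ⟨-, hball⟩
  · rcases (mem_closedBall.mp (closure_ball_subset_closedBall hball)).lt_or_eq with hlt | heq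
    · exact .inl ⟨hs, hlt⟩
    · exact .inr heq
  · exact .inr (frontier_ball_subset_sphere hball)

lemma norm_le_mul_div_pow_of_eqOn_zero_frontier {M : ℝ} (ha : a ∉ closure U)
    (hf : DiffContOnCl ℂ f (U ∩ ball a r)) (hzero : EqOn f 0 (frontier U ∩ ball a r))
    (hM : ∀ w ∈ closure (U ∩ ball a r), ‖f w‖ ≤ M) (N : ℕ) {z : ℂ} (hz : z ∈ U ∩ ball a r) :
    ‖f z‖ ≤ M * (dist z a / r) ^ N := by
  have hr : 0 < r := dist_nonneg.trans_lt hz.2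
  have hM₀ : 0 ≤ M := (norm_nonneg _).trans (hM z (subset_closure hz))
  have hne : ∀ w ∈ closure (U ∩ ball a r), w - a ≠ 0 := fun w hw h ↦
    ha (sub_eq_zero.mp h ▸ closure_mono inter_subset_left hw)
  have hg : DiffContOnCl ℂ (fun w ↦ ((w - a) ^ N)⁻¹ • f w) (U ∩ ball a r) := by
    have hpow : Differentiable ℂ fun w : ℂ ↦ (w - a) ^ N := by fun_prop
    exact (hpow.diffContOnCl.inv fun w hw ↦ pow_ne_zero N (hne w hw)).smul hf
  have hnorm : ∀ w, ‖((w - a) ^ N)⁻¹ • f w‖ = (dist w a ^ N)⁻¹ * ‖f w‖ := fun w ↦ by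
    rw [norm_smul, norm_inv, norm_pow, dist_eq_norm]
  have hbound : ∀ w ∈ frontier (U ∩ ball a r), ‖((w - a) ^ N)⁻¹ • f w‖ ≤ (r ^ N)⁻¹ * M := by
    intro w hw
    rw [hnorm]
    rcases mem_or_mem_sphere_of_mem_frontier_inter_ball hw with hedge | hsphere
    · rw [hzero hedge, Pi.zero_apply, norm_zero, mul_zero]
      positivity
    · rw [mem_sphere.mp hsphere]
      gcongr
      exact hM w (frontier_subset_closure hw)
  have hmax := norm_le_of_forall_mem_frontier_norm_le (isBounded_ball.subset inter_subset_right)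
    hg hbound (subset_closure hz)
  have hdist : 0 < dist z a := dist_pos.mpr (sub_ne_zero.mp (hne z (subset_closure hz)))
  rw [hnorm, inv_mul_le_iff₀ (by positivity)] at hmax
  calc ‖f z‖ ≤ dist z a ^ N * ((r ^ N)⁻¹ * M) := hmax
    _ = M * (dist z a / r) ^ N := by rw [div_pow]; ring

theorem eqOn_zero_of_eqOn_zero_frontier_inter_ball (ha : a ∉ closure U)
    (hf : DiffContOnCl ℂ f (U ∩ ball a r)) (hzero : EqOn f 0 (frontier U ∩ ball a r)) :
    EqOn f 0 (U ∩ ball a r) := by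
  intro z hz
  have hr : 0 < r := dist_nonneg.trans_lt hz.2
  have hcompact : IsCompact (closure (U ∩ ball a r)) :=
    (isBounded_ball.subset inter_subset_right).isCompact_closure
  obtain ⟨M, hM⟩ := hcompact.exists_bound_of_continuousOn hf.continuousOn
  have hlim : Tendsto (fun N : ℕ ↦ M * (dist z a / r) ^ N) atTop (𝓝 (M * 0)) :=
    (tendsto_pow_atTop_nhds_zero_of_lt_one (by positivity) ((div_lt_one hr).mpr hz.2)).const_mul M
  rw [mul_zero] at hlim
  exact norm_le_zero_iff.mp <| ge_of_tendsto' hlim fun N ↦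
    norm_le_mul_div_pow_of_eqOn_zero_frontier ha hf hzero hM N hz

theorem eqOn_zero_closedStrip_of_eq_zero_on_upper_edge {b c : ℝ} (hbc : b < c)
    (hf : DiffContOnCl ℂ f (im ⁻¹' Ioo b c)) (hzero : ∀ z : ℂ, z.im = c → f z = 0) :
    EqOn f 0 (im ⁻¹' Icc b c) := by
  have hclosure : closure (im ⁻¹' Ioo b c) = im ⁻¹' Icc b c := by
    rw [closure_preimage_im, closure_Ioo hbc.ne]
  have hopen : EqOn f 0 (im ⁻¹' Ioo b c) := by
    intro z hz
    let a : ℂ := ⟨z.re, c + 1⟩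
    have him_of_mem_ball : ∀ w ∈ ball a (c + 1 - b), b < w.im := fun w hw ↦ by
      have := (abs_im_le_norm (w - a)).trans_lt (mem_ball_iff_norm.mp hw)
      rw [sub_im, abs_lt] at this
      linarith [this.1]
    have ha_notMem : a ∉ closure (im ⁻¹' Ioo b c) := by
      rw [hclosure]
      exact fun h ↦ (lt_add_one c).not_ge h.2
    have hz_ball : z ∈ ball a (c + 1 - b) := by
      have hdist : dist z a = dist z.im (c + 1) := dist_of_re_eq rfl
      rw [mem_ball, hdist, Real.dist_eq, abs_lt]
      constructor <;> linarith [hz.1, hz.2]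
    refine eqOn_zero_of_eqOn_zero_frontier_inter_ball ha_notMem (hf.mono inter_subset_left) ?_
      ⟨hz, hz_ball⟩
    rintro w ⟨hw, hw_ball⟩
    rw [frontier_preimage_im, frontier_Ioo hbc] at hw
    exact hzero w (hw.resolve_left (him_of_mem_ball w hw_ball).ne')
  rw [← hclosure]
  exact hopen.of_subset_closure hf.continuousOn continuousOn_const subset_closure subset_rfl

end BoundaryUniqueness

lemma diffContOnCl_antilinear_comp_conj_add {X Y : Type*} [NormedAddCommGroup X] [NormedSpace ℂ X]
    [NormedAddCommGroup Y] [NormedSpace ℂ Y] (J : X →L⋆[ℂ] Y) {f : ℂ → X} {U V : Set ℂ} {c : ℂ}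
    (hU : IsOpen U) (hf : DiffContOnCl ℂ f U) (hVU : MapsTo (fun z ↦ conj z + c) V U) :
    DiffContOnCl ℂ (fun z ↦ J (f (conj z + c))) V where
  differentiableOn z hz := by
    have hshift : DifferentiableAt ℂ (fun w ↦ f (w + c)) (conj z) :=
      differentiableAt_comp_add_const.mpr (hf.differentiableAt hU (hVU hz))
    exact (hshift.comp_semilinear₂ J
      (starL ℂ : ℂ ≃L⋆[ℂ] ℂ).toContinuousLinearMap).differentiableWithinAt
  continuousOn := by
    have hcont : Continuous fun z : ℂ ↦ conj z + c := by fun_prop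
    exact J.continuous.comp_continuousOn
      (hf.continuousOn.comp hcont.continuousOn (hVU.closure hcont))

theorem reflection_in_strip_general {X : Type*} [NormedAddCommGroup X] [NormedSpace ℂ X]
    (J : X →L⋆[ℂ] X) {b : ℝ} (hb : 0 < b) {F : ℂ → X}
    (hFc : ContinuousOn F (im ⁻¹' Icc 0 b)) (hFd : DifferentiableOn ℂ F (im ⁻¹' Ioo 0 b))
    (hFb : ∀ t : ℝ, F (t + b * I) = J (F t)) :
    (∀ z : ℂ, 0 ≤ z.im → z.im ≤ b → F (conj z + b * I) = J (F z)) ∧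
      J (F (b * I / 2)) = F (b * I / 2) := by
  have hF : DiffContOnCl ℂ F (im ⁻¹' Ioo 0 b) :=
    ⟨hFd, by rwa [closure_preimage_im, closure_Ioo hb.ne]⟩
  have hmaps : MapsTo (fun z ↦ conj z + b * I) (im ⁻¹' Ioo 0 b) (im ⁻¹' Ioo 0 b) := by
    rintro z ⟨hz₀, hzb⟩
    constructor <;> simpa
  have hconj : ∀ z : ℂ, conj (conj z + b * I) + b * I = z := fun z ↦ by simp
  have hedge : ∀ z : ℂ, z.im = b → F z - J (F (conj z + b * I)) = 0 := by
    intro z hz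
    have hz_eq : z = z.re + b * I := by rw [← hz, re_add_im]
    have hz_conj : conj z + b * I = z.re := by
      rw [hz_eq]
      simp
    rw [hz_conj, ← hFb, ← hz_eq, sub_self]
  have heq := eqOn_zero_closedStrip_of_eq_zero_on_upper_edge hb
    (hF.sub (diffContOnCl_antilinear_comp_conj_add J (isOpen_Ioo.preimage continuous_im) hF hmaps))
    hedge
  have hreflect : ∀ z : ℂ, 0 ≤ z.im → z.im ≤ b → F (conj z + b * I) = J (F z) := by
    intro z hz₀ hzb
    have hmem : conj z + b * I ∈ im ⁻¹' Icc 0 b := by constructor <;> simpa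
    simpa only [hconj] using sub_eq_zero.mp (heq hmem)
  have hmid : conj (b * I / 2) + b * I = b * I / 2 := by
    simp only [map_div₀, map_mul, conj_ofReal, conj_I, map_ofNat]
    ring
  refine ⟨hreflect, ?_⟩
  have him : (b * I / 2 : ℂ).im = b / 2 := by simp
  rw [← hreflect _ (by linarith) (by linarith), hmid]

/-- If `J` is a continuous antilinear involution on a complex Banach space `X` and
`F` is continuous on the closed strip `0 ≤ Im z ≤ π`, holomorphic on the open strip,
and satisfies `F(t + πi) = J(F(t))` for all `t ∈ ℝ`, then
`F(conj z + πi) = J(F z)` on the closed strip; in particular `J` fixes `F(πi/2)`. -/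
theorem reflection_in_strip
    (X : Type*) [NormedAddCommGroup X] [NormedSpace ℂ X] [CompleteSpace X]
    (J : X → X) (hJcont : Continuous J)
    (hJinv : ∀ x, J (J x) = x)
    (hJadd : ∀ x y, J (x + y) = J x + J y)
    (hJsmul : ∀ (c : ℂ) (x : X), J (c • x) = (starRingEnd ℂ) c • J x)
    (F : ℂ → X)
    (hFc : ContinuousOn F {z : ℂ | 0 ≤ z.im ∧ z.im ≤ Real.pi})
    (hFd : ∀ z : ℂ, 0 < z.im → z.im < Real.pi → DifferentiableAt ℂ F z)
    (hFb : ∀ t : ℝ, F ((t : ℂ) + Real.pi * Complex.I) = J (F (t : ℂ))) :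
    (∀ z : ℂ, 0 ≤ z.im → z.im ≤ Real.pi →
      F ((starRingEnd ℂ) z + Real.pi * Complex.I) = J (F z)) ∧
    J (F (Real.pi * Complex.I / 2)) = F (Real.pi * Complex.I / 2) := by
  exact reflection_in_strip_general ⟨⟨⟨J, hJadd⟩, hJsmul⟩, hJcont⟩ Real.pi_pos hFc
    (fun z hz ↦ (hFd z hz.1 hz.2).differentiableWithinAt) hFb
end
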